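/- arXiv:math/0607686 — 2 statements merged into one kernel-verified Lean document; each statement's English description precedes it below -/
import Mathlib

section
/- Let (g_m)_{m≥1} be a sequence of probability densities on [0,1], and for each M let h_M = g_1 ∗ g_2 ∗ ··· ∗ g_M denote their circular convolution (the density of the sum Y_1 + ··· + Y_M modulo 1 of independent random variables Y_m with densities g_m). Then h_M converges in L¹([0,1]) to the constant function 1 (the uniform density) as M → ∞ if and only if for every integer n ≠ 0 one has lim_{M→∞} ĝ_1(n)·ĝ_2(n)···ĝ_M(n) = 0. -/
open MeasureTheory Filter

noncomputable section

/-- A probability density on `[0,1]`: nonnegative, integrable, total integral one. -/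
def IsProbDensity (g : ℝ → ℝ) : Prop :=
  (∀ x, 0 ≤ g x) ∧ IntegrableOn g (Set.Icc 0 1) ∧ (∫ x in (0:ℝ)..1, g x) = 1

/-- Circular convolution on `[0,1]` (the argument is taken modulo 1). -/
def circConv (f g : ℝ → ℝ) : ℝ → ℝ :=
  fun x => ∫ y in (0:ℝ)..1, f y * g (Int.fract (x - y))

/-- The `n`-th Fourier coefficient of `g ∈ L¹([0,1])`. -/
def fourierCoeff01 (g : ℝ → ℝ) (n : ℤ) : ℂ :=
  ∫ x in (0:ℝ)..1, (g x : ℂ) * Complex.exp (-(2 * Real.pi * Complex.I) * n * x)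

/-!
On the circle, let `T_M` be the operator `f ↦ f ∗ g_2 ∗ ⋯ ∗ g_M` on `L¹`. It is a contraction,
fixes the constant `1`, and multiplies the character `e_n` by `ĝ_2(n) ⋯ ĝ_M(n)`. Hence
`h_M - 1 = T_M (g_1 - 1)`, and its `n`-th Fourier coefficient is `ĝ_1(n) ⋯ ĝ_M(n)` for `n ≠ 0`
and vanishes for `n = 0`. Fourier coefficients are bounded by the `L¹` norm, which gives the direct
implication.

Conversely, every `f ∈ L¹` lies in the closed span of the characters `e_n` with `f̂(n) ≠ 0`:
`f` is the limit of `f ∗ φ` along an approximate identity, and each `φ` is a limit of trigonometric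
polynomials, which convolution with `f` maps into that span. For `f = g_1 - 1` the products tend to
`0` at each such `n`, so the contractions `T_M` tend to `0` on each such `e_n`, hence on the closed
span, hence at `f`.
-/

section DenseConvergence

variable {ι 𝕜 E F : Type*} [NontriviallyNormedField 𝕜] [NormedAddCommGroup E] [NormedSpace 𝕜 E]
  [NormedAddCommGroup F] [NormedSpace 𝕜 F] {l : Filter ι} {A : ι → E →L[𝕜] F} {B : E →L[𝕜] F}

theorem tendsto_apply_of_mem_closure_span {C : ℝ} (hA : ∀ i, ‖A i‖ ≤ C) {s : Set E}
    (hs : ∀ x ∈ s, Tendsto (A · x) l (nhds (B x))) {x : E}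
    (hx : x ∈ (Submodule.span 𝕜 s).topologicalClosure) : Tendsto (A · x) l (nhds (B x)) := by
  have hequi : Equicontinuous fun i => ⇑(A i) := by
    have hiff := (NormedSpace.equicontinuous_TFAE A).out 5 1
    exact hiff.mp ⟨C, hA⟩
  refine (hequi x).tendsto_of_mem_closure B.continuous.continuousWithinAt (fun y hy => ?_) hx
  induction hy using Submodule.span_induction with
  | mem y hy => exact hs y hy
  | zero => simp [tendsto_const_nhds]
  | add y z _ _ hy hz => simpa only [map_add] using hy.add hz
  | smul c y _ hy => simpa only [map_smul] using hy.const_smul c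

end DenseConvergence

section ConvolutionL1

open scoped Convolution
open ContinuousLinearMap (mul)

theorem integral_norm_convolution_le {𝕜 G E E' F : Type*} [NontriviallyNormedField 𝕜]
    [NormedAddCommGroup E] [NormedSpace 𝕜 E] [NormedAddCommGroup E'] [NormedSpace 𝕜 E']
    [NormedAddCommGroup F] [NormedSpace ℝ F] [NormedSpace 𝕜 F]
    [AddGroup G] [MeasurableSpace G] [MeasurableAdd₂ G] [MeasurableNeg G]
    {μ : Measure G} [SFinite μ] [μ.IsAddRightInvariant] (L : E →L[𝕜] E' →L[𝕜] F)
    {f : G → E} {g : G → E'} (hf : Integrable f μ) (hg : Integrable g μ) :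
    ∫ x, ‖(f ⋆[L, μ] g) x‖ ∂μ ≤ ‖L‖ * (∫ x, ‖f x‖ ∂μ) * ∫ x, ‖g x‖ ∂μ := by
  have hnorm := hf.norm.integrable_convolution (mul ℝ ℝ) hg.norm
  have hpoint : ∀ᵐ x ∂μ, ‖(f ⋆[L, μ] g) x‖ ≤
      ‖L‖ * ((fun t => ‖f t‖) ⋆[mul ℝ ℝ, μ] fun t => ‖g t‖) x := by
    filter_upwards [hf.norm.ae_convolution_exists (mul ℝ ℝ) hg.norm] with x hx
    rw [convolution_def, convolution_def, ← integral_const_mul]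
    refine norm_integral_le_of_norm_le (hx.integrable.const_mul _) (.of_forall fun t => ?_)
    simpa only [ContinuousLinearMap.mul_apply', mul_assoc] using L.le_opNorm₂ (f t) (g (x - t))
  calc ∫ x, ‖(f ⋆[L, μ] g) x‖ ∂μ
      ≤ ∫ x, ‖L‖ * ((fun t => ‖f t‖) ⋆[mul ℝ ℝ, μ] fun t => ‖g t‖) x ∂μ :=
        integral_mono_ae (hf.integrable_convolution L hg).norm (hnorm.const_mul _) hpoint
    _ = ‖L‖ * (∫ x, ‖f x‖ ∂μ) * ∫ x, ‖g x‖ ∂μ := by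
        rw [integral_const_mul, integral_convolution (mul ℝ ℝ) hf.norm hg.norm,
          ContinuousLinearMap.mul_apply', mul_assoc]

variable {𝕜 G : Type*} [RCLike 𝕜] [MeasurableSpace G] {μ : Measure G} [SFinite μ]

section Group

variable [AddGroup G] [MeasurableAdd₂ G] [MeasurableNeg G] [μ.IsAddRightInvariant]

theorem integrable_convolution_coeFn (f g : Lp 𝕜 1 μ) : Integrable (f ⋆[mul 𝕜 𝕜, μ] g) μ :=
  (L1.integrable_coeFn f).integrable_convolution _ (L1.integrable_coeFn g)

/-- Convolution on the right by `g`, the operator `f ↦ f ⋆ g` on `L¹(μ)`. -/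
def convL1 (g : Lp 𝕜 1 μ) : Lp 𝕜 1 μ →L[𝕜] Lp 𝕜 1 μ :=
  LinearMap.mkContinuous
    { toFun := fun f => (integrable_convolution_coeFn f g).toL1
      map_add' := fun f₁ f₂ => by
        rw [← Integrable.toL1_add, Integrable.toL1_eq_toL1_iff,
          convolution_congr (mul 𝕜 𝕜) (Lp.coeFn_add f₁ f₂) .rfl]
        have hexists (f : Lp 𝕜 1 μ) := (L1.integrable_coeFn f).ae_convolution_exists (mul 𝕜 𝕜)
          (L1.integrable_coeFn g)
        filter_upwards [hexists f₁, hexists f₂] with x h₁ h₂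
        exact h₁.add_distrib h₂
      map_smul' := fun c f => by
        rw [RingHom.id_apply, ← Integrable.toL1_smul', Integrable.toL1_eq_toL1_iff,
          convolution_congr (mul 𝕜 𝕜) (Lp.coeFn_smul c f) .rfl, smul_convolution] }
    ‖g‖ fun f => by
      have h := integral_norm_convolution_le (mul 𝕜 𝕜) (L1.integrable_coeFn f)
        (L1.integrable_coeFn g)
      rw [← L1.norm_of_fun_eq_integral_norm (integrable_convolution_coeFn f g),
        ← L1.norm_eq_integral_norm, ← L1.norm_eq_integral_norm, ContinuousLinearMap.opNorm_mul,
        one_mul, mul_comm] at h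
      exact h

theorem coeFn_convL1 (g f : Lp 𝕜 1 μ) : convL1 g f =ᵐ[μ] f ⋆[mul 𝕜 𝕜, μ] g :=
  (integrable_convolution_coeFn f g).coeFn_toL1

theorem norm_convL1_le (g : Lp 𝕜 1 μ) : ‖convL1 g‖ ≤ ‖g‖ :=
  LinearMap.mkContinuous_norm_le _ (norm_nonneg g) _

/-- The operator `f ↦ f ⋆ g 0 ⋆ ⋯ ⋆ g (M - 1)` on `L¹(μ)`. -/
def iterConvL1 (g : ℕ → Lp 𝕜 1 μ) : ℕ → Lp 𝕜 1 μ →L[𝕜] Lp 𝕜 1 μ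
  | 0 => .id 𝕜 _
  | M + 1 => convL1 (g M) ∘L iterConvL1 g M

theorem norm_iterConvL1_le_one {g : ℕ → Lp 𝕜 1 μ} (hg : ∀ m, ‖g m‖ ≤ 1) (M : ℕ) :
    ‖iterConvL1 g M‖ ≤ 1 := by
  induction M with
  | zero => exact ContinuousLinearMap.norm_id_le
  | succ M ih =>
    exact (ContinuousLinearMap.opNorm_comp_le _ _).trans
      (mul_le_one₀ ((norm_convL1_le _).trans (hg M)) (norm_nonneg _) ih)

theorem coeFn_iterConvL1 {g : ℕ → Lp 𝕜 1 μ} {f : Lp 𝕜 1 μ} {g' h : ℕ → G → 𝕜}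
    (hg : ∀ m, g m =ᵐ[μ] g' m) (h0 : f =ᵐ[μ] h 0)
    (hrec : ∀ M, h (M + 1) = h M ⋆[mul 𝕜 𝕜, μ] g' M) (M : ℕ) :
    iterConvL1 g M f =ᵐ[μ] h M := by
  induction M with
  | zero => exact h0
  | succ M ih =>
    rw [hrec, ← convolution_congr (mul 𝕜 𝕜) ih (hg M)]
    exact coeFn_convL1 (g M) (iterConvL1 g M f)

end Group

theorem convL1_comm [AddCommGroup G] [MeasurableAdd₂ G] [MeasurableNeg G]
    [μ.IsAddLeftInvariant] [μ.IsNegInvariant] (f g : Lp 𝕜 1 μ) : convL1 g f = convL1 f g := by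
  have hflip : (f : G → 𝕜) ⋆[mul 𝕜 𝕜, μ] g = g ⋆[mul 𝕜 𝕜, μ] f := by
    rw [← convolution_flip]
    congr
    ext
    simp
  refine Lp.ext ((coeFn_convL1 g f).trans ?_)
  rw [hflip]
  exact (coeFn_convL1 f g).symm

end ConvolutionL1

section Average

theorem tendsto_setAverage_closedBall {X E : Type*} [PseudoMetricSpace X] [MeasurableSpace X]
    [OpensMeasurableSpace X] {μ : Measure X} [IsLocallyFiniteMeasure μ] [μ.IsOpenPosMeasure]
    [NormedAddCommGroup E] [NormedSpace ℝ E] [CompleteSpace E] {f : X → E} {x : X}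
    (hf : ContinuousAt f x)
    (hfm : StronglyMeasurableAtFilter f (nhds x) μ) :
    Tendsto (fun r => ⨍ y in Metric.closedBall x r, f y ∂μ) (nhdsWithin 0 (Set.Ioi 0))
      (nhds (f x)) := by
  have hballs := (tendsto_closedBall_smallSets x).mono_left
    (nhdsWithin_le_nhds (s := Set.Ioi (0 : ℝ)))
  have hpos : ∀ᶠ r in nhdsWithin 0 (Set.Ioi 0), μ.real (Metric.closedBall x r) ≠ 0 := by
    filter_upwards [hballs.eventually (μ.finiteAt_nhds x).eventually, self_mem_nhdsWithin]
      with r hfin hr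
    exact (ENNReal.toReal_pos (Metric.measure_closedBall_pos μ x hr).ne' hfin.ne).ne'
  have hzero := (hf.integral_sub_linear_isLittleO_ae hfm hballs).tendsto_inv_smul_nhds_zero
  have hsub : Tendsto (fun r => (⨍ y in Metric.closedBall x r, f y ∂μ) - f x)
      (nhdsWithin 0 (Set.Ioi 0)) (nhds 0) := by
    refine hzero.congr' (hpos.mono fun r hr => ?_)
    simp only [setAverage_eq, smul_sub, inv_smul_smul₀ hr]
  exact tendsto_sub_nhds_zero_iff.mp hsub

end Average

section Circle

open AddCircle
open scoped Convolution
open ContinuousLinearMap (mul)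

variable {T : ℝ}

theorem fourier_sub_apply (n : ℤ) (x y : AddCircle T) :
    fourier n (x - y) = fourier n x * fourier (-n) y := by
  rw [fourier_apply, fourier_apply, fourier_apply, smul_sub, sub_eq_add_neg, toCircle_add, neg_smul,
    Circle.coe_mul]

variable [hT : Fact (0 < T)]

theorem fourierCoeff_fourierLp (m n : ℤ) :
    fourierCoeff (fourierLp 1 m : Lp ℂ 1 (haarAddCircle (T := T))) n =
      (Pi.single m 1 : ℤ → ℂ) n := by
  rw [fourierCoeff_congr_ae (coeFn_fourierLp 1 m), fourierCoeff_fourier]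

theorem norm_fourierCoeff_le_norm {E : Type*} [NormedAddCommGroup E] [NormedSpace ℂ E]
    (f : Lp E 1 (haarAddCircle (T := T))) (n : ℤ) :
    ‖fourierCoeff f n‖ ≤ ‖f‖ := by
  rw [L1.norm_eq_integral_norm]
  refine (norm_integral_le_integral_norm _).trans_eq ?_
  simp only [norm_smul, fourier_apply, Circle.norm_coe, one_mul]

theorem fourierCoeff_sub {E : Type*} [NormedAddCommGroup E] [NormedSpace ℂ E]
    (f g : Lp E 1 (haarAddCircle (T := T))) (n : ℤ) :
    fourierCoeff (f - g : Lp E 1 haarAddCircle) n = fourierCoeff f n - fourierCoeff g n := by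
  rw [fourierCoeff_congr_ae (Lp.coeFn_sub f g)]
  simp only [fourierCoeff, Pi.sub_apply, smul_sub]
  exact integral_sub ((L1.integrable_coeFn f).fourier_smul (-n))
    ((L1.integrable_coeFn g).fourier_smul (-n))

theorem fourierCoeff_convolution {f g : AddCircle T → ℂ}
    (hf : Integrable f haarAddCircle) (hg : Integrable g haarAddCircle) (n : ℤ) :
    fourierCoeff (f ⋆[mul ℂ ℂ, haarAddCircle] g) n = fourierCoeff f n * fourierCoeff g n := by
  have hmodulate (x : AddCircle T) :
      fourier (-n) x • (f ⋆[mul ℂ ℂ, haarAddCircle] g) x =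
        ((fun t => fourier (-n) t • f t) ⋆[mul ℂ ℂ, haarAddCircle]
          fun t => fourier (-n) t • g t) x := by
    have hsplit (t : AddCircle T) : fourier (-n) x = fourier (-n) t * fourier (-n) (x - t) := by
      simp only [fourier_apply, ← Circle.coe_mul, ← toCircle_add, ← smul_add, add_sub_cancel]
    rw [convolution_mul, convolution_mul, ← integral_smul]
    refine integral_congr_ae (.of_forall fun t => ?_)
    simp only [smul_eq_mul]
    rw [hsplit t]
    ring
  simp only [fourierCoeff, hmodulate]
  exact integral_convolution (mul ℂ ℂ) (hf.fourier_smul (-n)) (hg.fourier_smul (-n))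

theorem fourierCoeff_convL1 (g f : Lp ℂ 1 (haarAddCircle (T := T))) (n : ℤ) :
    fourierCoeff (convL1 g f) n = fourierCoeff f n * fourierCoeff g n := by
  rw [fourierCoeff_congr_ae (coeFn_convL1 g f),
    fourierCoeff_convolution (L1.integrable_coeFn f) (L1.integrable_coeFn g)]

theorem fourier_convolution_apply (n : ℤ) (f : AddCircle T → ℂ) (x : AddCircle T) :
    (fourier n ⋆[mul ℂ ℂ, haarAddCircle] f) x = fourierCoeff f n * fourier n x := by
  simp only [convolution_mul_swap, fourierCoeff, fourier_sub_apply, smul_eq_mul, mul_assoc]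
  rw [integral_const_mul, mul_comm]

theorem convL1_fourierLp (f : Lp ℂ 1 (haarAddCircle (T := T))) (n : ℤ) :
    convL1 f (fourierLp 1 n) = fourierCoeff f n • fourierLp 1 n := by
  apply Lp.ext
  filter_upwards [coeFn_convL1 f (fourierLp 1 n), coeFn_fourierLp 1 n,
    Lp.coeFn_smul (fourierCoeff f n) (fourierLp 1 n : Lp ℂ 1 (haarAddCircle (T := T)))]
    with x hconv hfourier hsmul
  rw [hconv, hsmul, convolution_congr (mul ℂ ℂ) (coeFn_fourierLp 1 n) .rfl,
    fourier_convolution_apply, Pi.smul_apply, hfourier, smul_eq_mul]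

theorem iterConvL1_fourierLp (g : ℕ → Lp ℂ 1 (haarAddCircle (T := T))) (n : ℤ) (M : ℕ) :
    iterConvL1 g M (fourierLp 1 n) =
      (∏ m ∈ Finset.range M, fourierCoeff (g m) n) • fourierLp 1 n := by
  induction M with
  | zero => simp [iterConvL1]
  | succ M ih =>
    rw [iterConvL1, ContinuousLinearMap.comp_apply, ih, map_smul, convL1_fourierLp, smul_smul,
      Finset.prod_range_succ]

theorem fourierCoeff_iterConvL1 (g : ℕ → Lp ℂ 1 (haarAddCircle (T := T)))
    (f : Lp ℂ 1 (haarAddCircle (T := T))) (n : ℤ) (M : ℕ) :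
    fourierCoeff (iterConvL1 g M f) n =
      fourierCoeff f n * ∏ m ∈ Finset.range M, fourierCoeff (g m) n := by
  induction M with
  | zero => simp [iterConvL1]
  | succ M ih =>
    rw [iterConvL1, ContinuousLinearMap.comp_apply, fourierCoeff_convL1, ih,
      Finset.prod_range_succ, mul_assoc]

/-- The density of the uniform distribution on the closed ball of radius `r` around `0`, an
approximate identity for convolution as `r → 0`. -/
def ballDensity (r : ℝ) : Lp ℂ 1 (haarAddCircle (T := T)) :=
  indicatorConstLp 1 (s := Metric.closedBall 0 r) Metric.isClosed_closedBall.measurableSet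
    (measure_ne_top _ _) (haarAddCircle.real (Metric.closedBall (0 : AddCircle T) r) : ℂ)⁻¹

theorem norm_ballDensity_le_one (r : ℝ) :
    ‖(ballDensity r : Lp ℂ 1 (haarAddCircle (T := T)))‖ ≤ 1 := by
  rw [ballDensity, norm_indicatorConstLp one_ne_zero ENNReal.one_ne_top, norm_inv,
    Complex.norm_of_nonneg measureReal_nonneg, ENNReal.toReal_one, div_one, Real.rpow_one]
  exact inv_mul_le_one

theorem fourierCoeff_ballDensity (r : ℝ) (n : ℤ) :
    fourierCoeff (ballDensity r : Lp ℂ 1 (haarAddCircle (T := T))) n =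
      ⨍ x in Metric.closedBall (0 : AddCircle T) r, fourier (-n) x ∂haarAddCircle := by
  rw [ballDensity, fourierCoeff_congr_ae indicatorConstLp_coeFn, fourierCoeff, setAverage_eq,
    ← integral_smul, ← integral_indicator Metric.isClosed_closedBall.measurableSet]
  refine integral_congr_ae (.of_forall fun x => ?_)
  by_cases hx : x ∈ Metric.closedBall 0 r <;> simp [hx, mul_comm]

theorem tendsto_fourierCoeff_ballDensity (n : ℤ) :
    Tendsto (fun r => fourierCoeff (ballDensity r : Lp ℂ 1 (haarAddCircle (T := T))) n)
      (nhdsWithin 0 (Set.Ioi 0)) (nhds 1) := by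
  have h := tendsto_setAverage_closedBall (μ := haarAddCircle) (x := (0 : AddCircle T))
    (fourier (-n)).continuous.continuousAt
    (fourier (-n)).continuous.stronglyMeasurable.stronglyMeasurableAtFilter
  simpa only [fourierCoeff_ballDensity, fourier_eval_zero] using h

theorem mem_closure_span_range_fourierLp (f : Lp ℂ 1 (haarAddCircle (T := T))) :
    f ∈ (Submodule.span ℂ (Set.range (fourierLp 1))).topologicalClosure := by
  rw [span_fourierLp_closure_eq_top ENNReal.one_ne_top]
  exact Submodule.mem_top

theorem tendsto_convL1_ballDensity (f : Lp ℂ 1 (haarAddCircle (T := T))) :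
    Tendsto (fun r => convL1 (ballDensity r) f) (nhdsWithin 0 (Set.Ioi 0)) (nhds f) := by
  refine tendsto_apply_of_mem_closure_span (B := .id ℂ _)
    (fun r => (norm_convL1_le _).trans (norm_ballDensity_le_one r)) ?_
    (mem_closure_span_range_fourierLp f)
  rintro _ ⟨n, rfl⟩
  simpa only [convL1_fourierLp, one_smul, ContinuousLinearMap.id_apply] using
    (tendsto_fourierCoeff_ballDensity n).smul_const
      (fourierLp 1 n : Lp ℂ 1 (haarAddCircle (T := T)))

theorem convL1_mem_closure_span_fourierLp (f φ : Lp ℂ 1 (haarAddCircle (T := T))) :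
    convL1 f φ ∈ (Submodule.span ℂ
      (fourierLp 1 '' Function.support (fourierCoeff f))).topologicalClosure := by
  refine map_mem_closure (convL1 f).continuous (mem_closure_span_range_fourierLp φ) fun ψ hψ => ?_
  refine Submodule.span_le (p := (Submodule.span ℂ _).comap (convL1 f).toLinearMap) |>.mpr ?_ hψ
  rintro _ ⟨n, rfl⟩
  change convL1 f (fourierLp 1 n) ∈ Submodule.span ℂ _
  rw [convL1_fourierLp]
  by_cases hn : fourierCoeff f n = 0
  · simp [hn]
  · exact Submodule.smul_mem _ _ (Submodule.subset_span ⟨n, hn, rfl⟩)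

theorem mem_closure_span_fourierLp (f : Lp ℂ 1 (haarAddCircle (T := T))) :
    f ∈ (Submodule.span ℂ
      (fourierLp 1 '' Function.support (fourierCoeff f))).topologicalClosure := by
  refine (Submodule.isClosed_topologicalClosure _).mem_of_tendsto (tendsto_convL1_ballDensity f)
    (.of_forall fun r => ?_)
  rw [convL1_comm]
  exact convL1_mem_closure_span_fourierLp f (ballDensity r)

theorem tendsto_iterConvL1_zero_iff {g : ℕ → Lp ℂ 1 (haarAddCircle (T := T))}
    (hg : ∀ m, ‖g m‖ ≤ 1) (f : Lp ℂ 1 (haarAddCircle (T := T))) :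
    Tendsto (fun M => iterConvL1 g M f) atTop (nhds 0) ↔
      ∀ n, Tendsto (fun M => fourierCoeff f n * ∏ m ∈ Finset.range M, fourierCoeff (g m) n)
        atTop (nhds 0) := by
  constructor
  · intro h n
    refine squeeze_zero_norm (fun M => ?_) (tendsto_zero_iff_norm_tendsto_zero.mp h)
    rw [← fourierCoeff_iterConvL1]
    exact norm_fourierCoeff_le_norm _ n
  · intro h
    refine tendsto_apply_of_mem_closure_span (B := 0) (norm_iterConvL1_le_one hg) ?_
      (mem_closure_span_fourierLp f)
    rintro _ ⟨n, hn, rfl⟩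
    rw [zero_apply]
    have hprod := ((h n).const_mul (fourierCoeff f n)⁻¹).smul_const
      (fourierLp 1 n : Lp ℂ 1 (haarAddCircle (T := T)))
    simpa only [inv_mul_cancel_left₀ hn, mul_zero, zero_smul, iterConvL1_fourierLp] using hprod

theorem tendsto_iterConvL1_one_iff {g : ℕ → Lp ℂ 1 (haarAddCircle (T := T))}
    (hg : ∀ m, ‖g m‖ ≤ 1) (hg0 : ∀ m, fourierCoeff (g m) 0 = 1)
    {f : Lp ℂ 1 (haarAddCircle (T := T))} (hf0 : fourierCoeff f 0 = 1) :
    Tendsto (fun M => iterConvL1 g M f) atTop (nhds (fourierLp 1 0)) ↔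
      ∀ n ≠ 0, Tendsto (fun M => fourierCoeff f n * ∏ m ∈ Finset.range M, fourierCoeff (g m) n)
        atTop (nhds 0) := by
  have hfixed (M : ℕ) : iterConvL1 g M (fourierLp 1 0) = fourierLp 1 0 := by
    simp only [iterConvL1_fourierLp, hg0, Finset.prod_const_one, one_smul]
  have hcoeff_zero : fourierCoeff (f - fourierLp 1 0 : Lp ℂ 1 haarAddCircle) 0 = 0 := by
    rw [fourierCoeff_sub, fourierCoeff_fourierLp, hf0, Pi.single_eq_same, sub_self]
  have hcoeff {n : ℤ} (hn : n ≠ 0) :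
      fourierCoeff (f - fourierLp 1 0 : Lp ℂ 1 haarAddCircle) n = fourierCoeff f n := by
    rw [fourierCoeff_sub, fourierCoeff_fourierLp, Pi.single_eq_of_ne hn, sub_zero]
  have hsub : Tendsto (fun M => iterConvL1 g M f) atTop (nhds (fourierLp 1 0)) ↔
      Tendsto (fun M => iterConvL1 g M (f - fourierLp 1 0)) atTop (nhds 0) := by
    simp only [map_sub, hfixed, tendsto_sub_nhds_zero_iff]
  rw [hsub, tendsto_iterConvL1_zero_iff hg]
  refine forall_congr' fun n => ?_
  rcases eq_or_ne n 0 with rfl | hn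
  · simp only [hcoeff_zero, zero_mul, tendsto_const_nhds, ne_eq, not_true_eq_false, false_imp_iff]
  · simp only [hcoeff hn, ne_eq, hn, not_false_eq_true, true_imp_iff]

end Circle

section Lift

open AddCircle
open scoped Convolution
open ContinuousLinearMap (mul)

/-- The `1`-periodic extension of the restriction of `f` to `[0, 1)`, as a complex function on the
circle. -/
def circleLift (f : ℝ → ℝ) : UnitAddCircle → ℂ :=
  liftIco 1 0 fun x => (f x : ℂ)

theorem circleLift_coe (f : ℝ → ℝ) (y : ℝ) :
    circleLift f (y : UnitAddCircle) = f (Int.fract y) := by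
  have hfract : (y : UnitAddCircle) = (Int.fract y : ℝ) :=
    QuotientAddGroup.eq_iff_sub_mem.mpr ⟨⌊y⌋, by simp [Int.self_sub_fract]⟩
  rw [circleLift, hfract, liftIco_zero_coe_apply ⟨Int.fract_nonneg y, Int.fract_lt_one y⟩]

theorem integral_comp_circleLift {E : Type*} [NormedAddCommGroup E] [NormedSpace ℝ E]
    (f : ℝ → ℝ) (Φ : UnitAddCircle → ℂ → E) :
    ∫ x, Φ x (circleLift f x) ∂haarAddCircle = ∫ x in (0 : ℝ)..1, Φ x (f x) := by
  rw [integral_haarAddCircle, inv_one, one_smul, ← UnitAddCircle.intervalIntegral_preimage 0,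
    zero_add]
  refine intervalIntegral.integral_congr_ae ?_
  filter_upwards [compl_mem_ae_iff.mpr (Real.volume_singleton (a := 1))] with y hy1 hy
  rw [Set.uIoc_of_le zero_le_one] at hy
  rw [circleLift_coe, Int.fract_eq_self.mpr ⟨hy.1.le, lt_of_le_of_ne hy.2 hy1⟩]

theorem integrable_circleLift {f : ℝ → ℝ} (hf : IntegrableOn f (Set.Icc 0 1)) :
    Integrable (circleLift f) haarAddCircle := by
  have hIoc : MemLp (fun x => (f x : ℂ)) 1 (volume.restrict (Set.Ioc 0 (0 + 1))) := by
    rw [zero_add, memLp_one_iff_integrable]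
    exact (hf.mono_set Set.Ioc_subset_Icc_self).ofReal
  have hnull : volume {((0 : ℝ) : UnitAddCircle)} = 0 := by
    simpa using volume_closedBall 1 (x := ((0 : ℝ) : UnitAddCircle)) 0
  refine memLp_one_iff_integrable.mp (hIoc.memLp_liftIoc.ae_eq ?_).haarAddCircle
  filter_upwards [compl_mem_ae_iff.mpr hnull] with x hx
  exact liftIoc_eq_liftIco_of_ne hx

theorem fourierCoeff_circleLift (f : ℝ → ℝ) (n : ℤ) :
    fourierCoeff (circleLift f) n = fourierCoeff01 f n := by
  rw [fourierCoeff, integral_comp_circleLift f fun x z => fourier (-n) x • z, fourierCoeff01]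
  refine intervalIntegral.integral_congr fun x _ => ?_
  simp only [fourier_coe_apply, smul_eq_mul]
  rw [mul_comm]
  congr 2
  push_cast
  ring

theorem circleLift_circConv (f g : ℝ → ℝ) :
    circleLift (circConv f g) = circleLift f ⋆[mul ℂ ℂ, haarAddCircle] circleLift g := by
  ext x
  induction x using QuotientAddGroup.induction_on with
  | H y =>
    have hfract (t : ℝ) : Int.fract (Int.fract y - t) = Int.fract (y - t) := by
      rw [← Int.self_sub_floor y, sub_right_comm, Int.fract_sub_intCast]
    rw [convolution_mul,
      integral_comp_circleLift f fun t z => z * circleLift g ((y : UnitAddCircle) - t)]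
    refine (circleLift_coe _ y).trans ?_
    rw [circConv, ← intervalIntegral.integral_ofReal]
    refine intervalIntegral.integral_congr fun t _ => ?_
    rw [← AddCircle.coe_sub, circleLift_coe, hfract, Complex.ofReal_mul]

theorem norm_sub_one_eq_intervalIntegral {f : Lp ℂ 1 (haarAddCircle (T := 1))} {u : ℝ → ℝ}
    (hf : f =ᵐ[haarAddCircle] circleLift u) :
    ‖f - fourierLp 1 0‖ = ∫ x in (0 : ℝ)..1, |u x - 1| := by
  have hdiff : ∀ᵐ x ∂haarAddCircle, ‖(f - fourierLp 1 0 : Lp ℂ 1 haarAddCircle) x‖ =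
      ‖circleLift u x - 1‖ := by
    filter_upwards [Lp.coeFn_sub f (fourierLp 1 0), coeFn_fourierLp 1 0, hf] with x hsub hone hu
    rw [hsub, Pi.sub_apply, hone, hu, fourier_zero]
  rw [L1.norm_eq_integral_norm, integral_congr_ae hdiff,
    integral_comp_circleLift u fun _ z => ‖z - 1‖]
  refine intervalIntegral.integral_congr fun x _ => ?_
  rw [← Complex.ofReal_one, ← Complex.ofReal_sub, Complex.norm_real, Real.norm_eq_abs]

namespace IsProbDensity

variable {g : ℝ → ℝ} (hg : IsProbDensity g)

/-- The probability density `g`, as an element of `L¹` of the circle. -/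
def toL1 : Lp ℂ 1 (haarAddCircle (T := 1)) :=
  (integrable_circleLift hg.2.1).toL1

theorem coeFn_toL1 : hg.toL1 =ᵐ[haarAddCircle] circleLift g :=
  (integrable_circleLift hg.2.1).coeFn_toL1

theorem norm_toL1 : ‖hg.toL1‖ = 1 := by
  rw [toL1, L1.norm_of_fun_eq_integral_norm, integral_comp_circleLift g fun _ z => ‖z‖]
  refine (intervalIntegral.integral_congr fun x _ => ?_).trans hg.2.2
  rw [Complex.norm_real, Real.norm_of_nonneg (hg.1 x)]

theorem fourierCoeff_toL1 (n : ℤ) : fourierCoeff hg.toL1 n = fourierCoeff01 g n := by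
  rw [fourierCoeff_congr_ae hg.coeFn_toL1, fourierCoeff_circleLift]

theorem fourierCoeff_toL1_zero : fourierCoeff hg.toL1 0 = 1 := by
  rw [fourierCoeff_toL1, fourierCoeff01]
  simp [intervalIntegral.integral_ofReal, hg.2.2]

end IsProbDensity

end Lift

/-- **Modulo 1 Central Limit Theorem (L¹ version).**
The circular convolutions `h M = g 1 ∗ ⋯ ∗ g M` of probability densities on `[0,1]`
converge in `L¹([0,1])` to the uniform density `1` as `M → ∞` iff for every
nonzero integer `n` the product of Fourier coefficients `ĝ₁(n)⋯ĝ_M(n)` tends to `0`. -/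
theorem modOneCLT_L1 (g : ℕ → ℝ → ℝ) (hg : ∀ m, 1 ≤ m → IsProbDensity (g m))
    (h : ℕ → ℝ → ℝ) (h1 : h 1 = g 1)
    (hrec : ∀ M, 1 ≤ M → h (M + 1) = circConv (h M) (g (M + 1))) :
    Tendsto (fun M => ∫ x in (0:ℝ)..1, |h M x - 1|) atTop (nhds 0) ↔
      ∀ n : ℤ, n ≠ 0 →
        Tendsto (fun M => ∏ m ∈ Finset.Icc 1 M, fourierCoeff01 (g m) n) atTop (nhds 0) := by
  have hdens (m : ℕ) : IsProbDensity (g (m + 1)) := hg _ m.succ_pos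
  have hconv (M : ℕ) : iterConvL1 (fun m => (hdens (m + 1)).toL1) M (hdens 0).toL1
      =ᵐ[AddCircle.haarAddCircle] circleLift (h (M + 1)) :=
    coeFn_iterConvL1 (h := fun M => circleLift (h (M + 1))) (fun m => (hdens (m + 1)).coeFn_toL1)
      (by simpa only [zero_add, h1] using (hdens 0).coeFn_toL1)
      (fun M => by rw [hrec _ M.succ_pos, circleLift_circConv]) M
  have hprod (n : ℤ) (M : ℕ) : ∏ m ∈ Finset.Icc 1 (M + 1), fourierCoeff01 (g m) n =
      fourierCoeff (hdens 0).toL1 n *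
        ∏ m ∈ Finset.range M, fourierCoeff (hdens (m + 1)).toL1 n := by
    simp only [IsProbDensity.fourierCoeff_toL1]
    rw [← Finset.Ico_add_one_right_eq_Icc, Finset.prod_Ico_eq_prod_range, add_tsub_cancel_right,
      Finset.prod_range_succ', mul_comm]
    simp only [add_comm 1]
  rw [← tendsto_add_atTop_iff_nat 1]
  simp only [← norm_sub_one_eq_intervalIntegral (hconv _), ← tendsto_iff_norm_sub_tendsto_zero]
  rw [tendsto_iterConvL1_one_iff (fun m => (hdens (m + 1)).norm_toL1.le)
    (fun m => (hdens (m + 1)).fourierCoeff_toL1_zero) (hdens 0).fourierCoeff_toL1_zero]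
  refine forall₂_congr fun n _ => ?_
  rw [← tendsto_add_atTop_iff_nat (f := fun M => ∏ m ∈ Finset.Icc 1 M, _) 1]
  simp only [hprod]

end
end

section
/- Let g be a probability density on [0,1] and let h_M = g ∗ g ∗ ··· ∗ g (M-fold circular convolution of g with itself), i.e. the density of the sum modulo 1 of M independent identically distributed random variables with common density g. Then h_M converges in L¹([0,1]) to the constant function 1 as M → ∞. -/
open MeasureTheory Filter

noncomputable section

/-!
Lift everything to the circle `ℝ ⧸ ℤ`, where convolution with the density `g` is a contraction of
`L¹` which the characters diagonalise, with eigenvalues the Fourier coefficients of `g`. The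
coefficient of index `0` is `1`. The others have modulus `< 1`, by the equality case of the triangle
inequality: a nontrivial character is not almost everywhere constant for the law with density `g`,
because its level sets are finite and that law has no atoms. Hence the powers of the contraction
converge to the projection onto the constants on trigonometric polynomials, and then on all of `L¹`
by density and uniform boundedness.
-/

open AddCircle ContinuousLinearMap
open scoped Convolution NNReal Topology

section BoundedOperators

variable {𝕜 E F α : Type*} [NontriviallyNormedField 𝕜] [SeminormedAddCommGroup E]
  [NormedSpace 𝕜 E] [SeminormedAddCommGroup F] [NormedSpace 𝕜 F]

theorem tendsto_apply_of_dense_span {l : Filter α} {S : α → E →L[𝕜] F} {P : E →L[𝕜] F} {C : ℝ≥0}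
    (hS : ∀ a, ‖S a‖₊ ≤ C) {s : Set E} (hs : Dense (Submodule.span 𝕜 s : Set E))
    (h : ∀ x ∈ s, Tendsto (S · x) l (𝓝 (P x))) (x : E) : Tendsto (S · x) l (𝓝 (P x)) := by
  have hclosed : IsClosed {x | Tendsto (S · x) l (𝓝 (P x))} :=
    (LipschitzWith.uniformEquicontinuous (fun a => S a) C fun a =>
      (S a).lipschitz.weaken (hS a)).equicontinuous.isClosed_setOfPred_tendsto P.continuous
  have hspan : (Submodule.span 𝕜 s : Set E) ⊆ {x | Tendsto (S · x) l (𝓝 (P x))} := fun x hx => by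
    induction hx using Submodule.span_induction with
    | mem x hx => exact h x hx
    | zero => simpa using tendsto_const_nhds
    | add x y _ _ hx hy => simpa using hx.add hy
    | smul c x _ hx => simpa using hx.const_smul c
  exact hclosed.closure_subset_iff.2 hspan (hs x)

theorem norm_pow_le_one {S : E →L[𝕜] E} (hS : ‖S‖ ≤ 1) (M : ℕ) : ‖S ^ M‖ ≤ 1 := by
  induction M with
  | zero => exact norm_id_le
  | succ M ih =>
    rw [pow_succ']
    exact (opNorm_comp_le _ _).trans (mul_le_one₀ hS (norm_nonneg _) ih)

end BoundedOperators

section Convolution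

variable {𝕜 A E E' F : Type*} [RCLike 𝕜] [NormedAddCommGroup E] [NormedSpace 𝕜 E]
  [NormedAddCommGroup E'] [NormedSpace 𝕜 E'] [NormedAddCommGroup F] [NormedSpace 𝕜 F]
  [NormedSpace ℝ F] [AddGroup A] [MeasurableSpace A] {μ : Measure A}

theorem ofReal_convolution (f k : A → ℝ) (x : A) :
    ((f ⋆[mul ℝ ℝ, μ] k) x : 𝕜) = ((fun y => (f y : 𝕜)) ⋆[mul 𝕜 𝕜, μ] fun y => (k y : 𝕜)) x := by
  simp only [convolution_mul, ← RCLike.ofReal_mul, integral_ofReal]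

variable [MeasurableAdd₂ A] [MeasurableNeg A] [SFinite μ] [μ.IsAddRightInvariant]
  {f : A → E} {k : A → E'}

theorem integral_norm_convolution_le_s9 (L : E →L[𝕜] E' →L[𝕜] F) (hf : Integrable f μ)
    (hk : Integrable k μ) :
    ∫ x, ‖(f ⋆[L, μ] k) x‖ ∂μ ≤ ‖L‖ * ((∫ x, ‖f x‖ ∂μ) * ∫ x, ‖k x‖ ∂μ) := by
  have hfk : Integrable ((‖f ·‖) ⋆[mul ℝ ℝ, μ] (‖k ·‖)) μ :=
    hf.norm.integrable_convolution (mul ℝ ℝ) hk.norm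
  calc ∫ x, ‖(f ⋆[L, μ] k) x‖ ∂μ
      ≤ ∫ x, ‖L‖ * ((‖f ·‖) ⋆[mul ℝ ℝ, μ] (‖k ·‖)) x ∂μ := by
        refine integral_mono_ae (hf.integrable_convolution L hk).norm (hfk.const_mul _) ?_
        filter_upwards [hf.norm.ae_convolution_exists (mul ℝ ℝ) hk.norm] with x hx
        rw [convolution_mul, ← integral_const_mul]
        refine norm_integral_le_of_norm_le (hx.integrable.const_mul _) (ae_of_all _ fun t => ?_)
        simpa only [mul_apply', mul_assoc] using L.le_opNorm₂ (f t) (k (x - t))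
    _ = ‖L‖ * ((∫ x, ‖f x‖ ∂μ) * ∫ x, ‖k x‖ ∂μ) := by
        rw [integral_const_mul, integral_convolution (mul ℝ ℝ) hf.norm hk.norm, mul_apply']

variable [SMulCommClass ℝ 𝕜 F]

/-- Convolution `f ↦ f ⋆ k` by an integrable function `k`, with respect to a bilinear map `L`, as a
continuous linear map on `L¹`. -/
def convolutionL1 (L : E →L[𝕜] E' →L[𝕜] F) (hk : Integrable k μ) : Lp E 1 μ →L[𝕜] Lp F 1 μ :=
  LinearMap.mkContinuous
    { toFun f := ((L1.integrable_coeFn f).integrable_convolution L hk).toL1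
      map_add' f g := by
        rw [← Integrable.toL1_add, Integrable.toL1_eq_toL1_iff,
          convolution_congr L (Lp.coeFn_add f g) (ae_eq_refl k)]
        filter_upwards [(L1.integrable_coeFn f).ae_convolution_exists L hk,
          (L1.integrable_coeFn g).ae_convolution_exists L hk] with x hf hg
        exact hf.add_distrib hg
      map_smul' c f := by
        rw [RingHom.id_apply, ← Integrable.toL1_smul', Integrable.toL1_eq_toL1_iff,
          convolution_congr L (Lp.coeFn_smul c f) (ae_eq_refl k), smul_convolution] }
    (‖L‖ * ∫ x, ‖k x‖ ∂μ) fun f => by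
      rw [LinearMap.coe_mk, AddHom.coe_mk, L1.norm_of_fun_eq_integral_norm,
        L1.norm_eq_integral_norm, mul_right_comm, mul_assoc]
      exact integral_norm_convolution_le_s9 L (L1.integrable_coeFn f) hk

theorem convolutionL1_toL1 (L : E →L[𝕜] E' →L[𝕜] F) (hf : Integrable f μ) (hk : Integrable k μ) :
    convolutionL1 L hk hf.toL1 = (hf.integrable_convolution L hk).toL1 :=
  (Integrable.toL1_eq_toL1_iff _ _ ((L1.integrable_coeFn _).integrable_convolution L hk) _).2 <|
    (convolution_congr L hf.coeFn_toL1 (ae_eq_refl k)).eventuallyEq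

theorem norm_convolutionL1_le (L : E →L[𝕜] E' →L[𝕜] F) (hk : Integrable k μ) :
    ‖convolutionL1 L hk‖ ≤ ‖L‖ * ∫ x, ‖k x‖ ∂μ :=
  LinearMap.mkContinuous_norm_le _ (by positivity) _

end Convolution

section ConvolutionPowers

variable {𝕜 A E E' : Type*} [RCLike 𝕜] [NormedAddCommGroup E] [NormedSpace 𝕜 E] [NormedSpace ℝ E]
  [NormedAddCommGroup E'] [NormedSpace 𝕜 E'] [AddGroup A]
  [MeasurableSpace A] [MeasurableAdd₂ A] [MeasurableNeg A] {μ : Measure A} [SFinite μ]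
  [μ.IsAddRightInvariant] {L : E →L[𝕜] E' →L[𝕜] E} {k : A → E'} {h : ℕ → A → E}

theorem integrable_of_succ_eq_convolution (h0 : Integrable (h 0) μ) (hk : Integrable k μ)
    (hrec : ∀ M, h (M + 1) = h M ⋆[L, μ] k) (M : ℕ) : Integrable (h M) μ := by
  induction M with
  | zero => exact h0
  | succ M ih => exact hrec M ▸ ih.integrable_convolution L hk

theorem convolutionL1_pow_toL1 [SMulCommClass ℝ 𝕜 E] (h0 : Integrable (h 0) μ)
    (hk : Integrable k μ) (hrec : ∀ M, h (M + 1) = h M ⋆[L, μ] k) (M : ℕ) :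
    (convolutionL1 L hk ^ M) h0.toL1 =
      (integrable_of_succ_eq_convolution h0 hk hrec M).toL1 := by
  induction M with
  | zero => rfl
  | succ M ih =>
    rw [pow_succ', mul_apply_eq_comp, ih, convolutionL1_toL1, Integrable.toL1_eq_toL1_iff, hrec]

end ConvolutionPowers

section Circle

variable {T : ℝ} [hT : Fact (0 < T)]

instance : Nontrivial (AddCircle T) :=
  have : Nontrivial (Set.Ico (0 : ℝ) (0 + T)) :=
    (Set.Ico_infinite (lt_add_of_pos_right 0 hT.out)).nontrivial.coe_sort
  (equivIco T 0).nontrivial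

theorem finite_setOf_fourier_eq {n : ℤ} (hn : n ≠ 0) (c : ℂ) :
    {t : AddCircle T | fourier n t = c}.Finite := by
  rcases Set.eq_empty_or_nonempty {t : AddCircle T | fourier n t = c} with h | ⟨s, hs⟩
  · exact h ▸ Set.finite_empty
  have htorsion : {u : AddCircle T | n • u = 0}.Finite :=
    finite_torsion_of_isSMulRegular_int T n (IsSMulRegular.of_ne_zero hn)
  refine (htorsion.image (· + s)).subset fun t ht => ⟨t - s, ?_, sub_add_cancel t s⟩
  have hts : n • t = n • s :=
    injective_toCircle hT.out.ne' <| Circle.ext <| by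
      rw [← fourier_apply, ← fourier_apply, ht, hs]
  rw [Set.mem_ofPred_eq, smul_sub, hts, sub_self]

theorem norm_integral_fourier_lt_one (ν : Measure (AddCircle T)) [IsProbabilityMeasure ν]
    [NullSingletonClass ν] {n : ℤ} (hn : n ≠ 0) : ‖∫ t, fourier n t ∂ν‖ < 1 := by
  have hnorm : ∀ᵐ t ∂ν, ‖fourier n t‖ ≤ 1 := ae_of_all _ fun _ => (Circle.norm_coe _).le
  rcases ae_eq_const_or_norm_integral_lt_of_norm_le_const hnorm with hconst | hlt
  · obtain ⟨t, ht, ht'⟩ :=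
      (hconst.and ((finite_setOf_fourier_eq hn _).countable.ae_notMem ν)).exists
    exact absurd ht ht'
  · simpa using hlt

theorem norm_fourierCoeff_lt_one {g : AddCircle T → ℝ} (hg : Integrable g haarAddCircle)
    (hg0 : 0 ≤ g) (hg1 : ∫ t, g t ∂haarAddCircle = 1) {n : ℤ} (hn : n ≠ 0) :
    ‖fourierCoeff (fun t => (g t : ℂ)) n‖ < 1 := by
  let ν := haarAddCircle.withDensity fun t => ENNReal.ofReal (g t)
  have : IsProbabilityMeasure ν := ⟨by
    rw [withDensity_apply _ .univ, setLIntegral_univ,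
      ← ofReal_integral_eq_lintegral_ofReal hg (ae_of_all _ hg0), hg1, ENNReal.ofReal_one]⟩
  have hcoeff : fourierCoeff (fun t => (g t : ℂ)) n = ∫ t, fourier (-n) t ∂ν := by
    rw [fourierCoeff, integral_withDensity_eq_integral_toReal_smul₀ hg.1.aemeasurable.ennreal_ofReal
      (ae_of_all _ fun _ => ENNReal.ofReal_lt_top)]
    refine integral_congr_ae (ae_of_all _ fun t => ?_)
    simp only [ENNReal.toReal_ofReal (hg0 t), smul_eq_mul, Complex.real_smul, mul_comm]
  exact hcoeff ▸ norm_integral_fourier_lt_one ν (neg_ne_zero.2 hn)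

theorem convolution_fourier (k : AddCircle T → ℂ) (n : ℤ) :
    fourier n ⋆[mul ℂ ℂ, haarAddCircle] k = fourierCoeff k n • ⇑(fourier (T := T) n) := by
  ext z
  rw [convolution_mul_swap, Pi.smul_apply, smul_eq_mul, fourierCoeff, ← integral_mul_const]
  congr 1 with t
  simp only [fourier_apply, sub_eq_add_neg, smul_add, smul_neg, neg_smul, toCircle_add,
    Circle.coe_mul, smul_eq_mul]
  ring

theorem convolutionL1_fourierLp {k : AddCircle T → ℂ} (hk : Integrable k haarAddCircle) (n : ℤ) :
    convolutionL1 (mul ℂ ℂ) hk (fourierLp 1 n) = fourierCoeff k n • fourierLp 1 n := by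
  have hf : Integrable (fourier n) (haarAddCircle : Measure (AddCircle T)) :=
    (L1.integrable_coeFn (fourierLp 1 n)).congr (coeFn_fourierLp 1 n)
  have hfL1 : fourierLp 1 n = hf.toL1 := Lp.ext ((coeFn_fourierLp 1 n).trans hf.coeFn_toL1.symm)
  rw [hfL1, convolutionL1_toL1, ← Integrable.toL1_smul _ hf, Integrable.toL1_eq_toL1_iff,
    convolution_fourier]
  rfl

theorem convolutionL1_pow_fourierLp {k : AddCircle T → ℂ} (hk : Integrable k haarAddCircle)
    (n : ℤ) (M : ℕ) :
    (convolutionL1 (mul ℂ ℂ) hk ^ M) (fourierLp 1 n) = fourierCoeff k n ^ M • fourierLp 1 n := by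
  induction M with
  | zero => simp
  | succ M ih =>
    rw [pow_succ', mul_apply_eq_comp, ih, map_smul, convolutionL1_fourierLp, smul_smul, pow_succ]

theorem tendsto_convolutionL1_pow {k : AddCircle T → ℂ} (hk : Integrable k haarAddCircle)
    (hnorm : ∫ t, ‖k t‖ ∂haarAddCircle ≤ 1) (hk1 : ∫ t, k t ∂haarAddCircle = 1)
    (hlt : ∀ n ≠ 0, ‖fourierCoeff k n‖ < 1) (f : Lp ℂ 1 (haarAddCircle : Measure (AddCircle T))) :
    Tendsto (fun M => (convolutionL1 (mul ℂ ℂ) hk ^ M) f) atTop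
      (𝓝 (convolutionL1 (mul ℂ ℂ) (integrable_const (1 : ℂ)) f)) := by
  have hcontraction : ‖convolutionL1 (mul ℂ ℂ) hk‖ ≤ 1 :=
    (norm_convolutionL1_le _ hk).trans (by simpa using hnorm)
  have hone (n : ℤ) : fourierCoeff (fun _ : AddCircle T => (1 : ℂ)) n =
      (Pi.single 0 1 : ℤ → ℂ) n := by
    rw [← fourierCoeff_fourier (T := T)]
    congr with t
    rw [fourier_zero]
  refine tendsto_apply_of_dense_span (C := 1) (norm_pow_le_one hcontraction)
    (Submodule.dense_iff_topologicalClosure_eq_top.2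
      (span_fourierLp_closure_eq_top ENNReal.one_ne_top)) ?_ f
  rintro _ ⟨n, rfl⟩
  simp_rw [convolutionL1_pow_fourierLp, convolutionL1_fourierLp, hone]
  refine Tendsto.smul_const ?_ _
  rcases eq_or_ne n 0 with rfl | hn
  · have hzero : fourierCoeff k 0 = 1 := by simpa [fourierCoeff] using hk1
    rw [hzero, Pi.single_eq_same]
    exact tendsto_const_nhds.congr fun M => (one_pow M).symm
  · simpa [hn] using tendsto_pow_atTop_nhds_zero_of_norm_lt_one (hlt n hn)

theorem tendsto_integral_norm_sub_of_succ_eq_convolution {k : AddCircle T → ℂ}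
    (hk : Integrable k haarAddCircle) (hnorm : ∫ t, ‖k t‖ ∂haarAddCircle ≤ 1)
    (hk1 : ∫ t, k t ∂haarAddCircle = 1) (hlt : ∀ n ≠ 0, ‖fourierCoeff k n‖ < 1)
    {h : ℕ → AddCircle T → ℂ} (h0 : Integrable (h 0) haarAddCircle)
    (hrec : ∀ M, h (M + 1) = h M ⋆[mul ℂ ℂ, haarAddCircle] k) :
    Tendsto (fun M => ∫ z, ‖h M z - ∫ t, h 0 t ∂haarAddCircle‖ ∂haarAddCircle) atTop (𝓝 0) := by
  have hlim := tendsto_iff_norm_sub_tendsto_zero.1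
    (tendsto_convolutionL1_pow hk hnorm hk1 hlt h0.toL1)
  refine hlim.congr fun M => ?_
  rw [convolutionL1_pow_toL1 h0 hk hrec, convolutionL1_toL1, ← Integrable.toL1_sub,
    L1.norm_of_fun_eq_integral_norm]
  simp [convolution_mul]

theorem tendsto_integral_abs_sub_of_succ_eq_convolution {g : AddCircle T → ℝ}
    (hg : Integrable g haarAddCircle) (hg0 : 0 ≤ g) (hg1 : ∫ t, g t ∂haarAddCircle = 1)
    {h : ℕ → AddCircle T → ℝ} (h0 : Integrable (h 0) haarAddCircle)
    (hrec : ∀ M, h (M + 1) = h M ⋆[mul ℝ ℝ, haarAddCircle] g) :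
    Tendsto (fun M => ∫ z, |h M z - ∫ t, h 0 t ∂haarAddCircle| ∂haarAddCircle) atTop (𝓝 0) := by
  have hnorm : ∫ t, ‖(g t : ℂ)‖ ∂haarAddCircle ≤ 1 := by
    simpa [abs_of_nonneg (hg0 _)] using hg1.le
  have hmass : ∫ t, (g t : ℂ) ∂haarAddCircle = 1 := by
    rw [integral_complex_ofReal, hg1, Complex.ofReal_one]
  have hrecℂ (M : ℕ) : (fun z => (h (M + 1) z : ℂ)) =
      (fun z => (h M z : ℂ)) ⋆[mul ℂ ℂ, haarAddCircle] fun z => (g z : ℂ) := by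
    rw [hrec]
    exact funext (ofReal_convolution (𝕜 := ℂ) _ _)
  refine (tendsto_integral_norm_sub_of_succ_eq_convolution hg.ofReal hnorm hmass
    (fun n hn => norm_fourierCoeff_lt_one hg hg0 hg1 hn) (h := fun M z => (h M z : ℂ)) h0.ofReal
    hrecℂ).congr fun M => ?_
  simp_rw [integral_complex_ofReal, ← Complex.ofReal_sub, Complex.norm_real, Real.norm_eq_abs]

end Circle

section Lift

variable {E : Type*} [NormedAddCommGroup E] {T : ℝ} [Fact (0 < T)] (a : ℝ)

theorem liftIoc_ae_eq_liftIco {B : Type*} (f : ℝ → B) : liftIoc T a f =ᵐ[volume] liftIco T a f :=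
  (Measure.ae_ne volume (a : AddCircle T)).mono fun _ => liftIoc_eq_liftIco_of_ne

theorem integral_liftIco [NormedSpace ℝ E] (f : ℝ → E) :
    ∫ z, liftIco T a f z = ∫ x in a..a + T, f x := by
  rw [← integral_congr_ae (liftIoc_ae_eq_liftIco a f), integral_liftIoc_eq_intervalIntegral]

theorem integrable_liftIco {f : ℝ → E} (hf : IntegrableOn f (Set.Ioc a (a + T))) :
    Integrable (liftIco T a f) :=
  Integrable.congr (((measurePreserving_subtype_coe measurableSet_Ioc).comp
    (measurePreserving_equivIoc T)).integrable_comp_of_integrable hf) (liftIoc_ae_eq_liftIco a f)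

end Lift

section UnitInterval

theorem haarAddCircle_eq_volume : (haarAddCircle : Measure UnitAddCircle) = volume := by
  rw [volume_eq_smul_haarAddCircle, ENNReal.ofReal_one, one_smul]

theorem liftIco_coe_eq_fract {B : Type*} (f : ℝ → B) (x : ℝ) :
    liftIco (1 : ℝ) 0 f x = f (Int.fract x) := by
  simp [liftIco, coe_equivIco_mk_apply]

theorem liftIco_circConv (f g : ℝ → ℝ) :
    liftIco (1 : ℝ) 0 (circConv f g) =
      liftIco (1 : ℝ) 0 f ⋆[mul ℝ ℝ, volume] liftIco (1 : ℝ) 0 g := by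
  ext z
  obtain ⟨x, hx, rfl⟩ := eq_coe_Ico z
  have hintegrand (t : UnitAddCircle) : liftIco (1 : ℝ) 0 f t * liftIco (1 : ℝ) 0 g (x - t) =
      liftIco (1 : ℝ) 0 (fun y => f y * g (Int.fract (x - y))) t := by
    obtain ⟨y, hy, rfl⟩ := eq_coe_Ico t
    simp only [← coe_sub, liftIco_coe_eq_fract, Int.fract_eq_self.2 hy]
  simp_rw [convolution_mul, hintegrand, integral_liftIco, zero_add, liftIco_coe_eq_fract,
    Int.fract_eq_self.2 hx, circConv]

theorem modOneCLT_iid_general (g : ℝ → ℝ) (hg : IsProbDensity g)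
    (h : ℕ → ℝ → ℝ) (h1 : IntegrableOn (h 1) (Set.Icc 0 1))
    (hrec : ∀ M, 1 ≤ M → h (M + 1) = circConv (h M) g) :
    Tendsto (fun M => ∫ x in (0:ℝ)..1, |h M x - ∫ y in (0:ℝ)..1, h 1 y|) atTop (nhds 0) := by
  obtain ⟨hg0, hgi, hg1⟩ := hg
  have hlift {f : ℝ → ℝ} (hf : IntegrableOn f (Set.Icc 0 1)) :
      Integrable (liftIco (1 : ℝ) 0 f) haarAddCircle := by
    rw [haarAddCircle_eq_volume]
    exact integrable_liftIco 0 (hf.mono_set (by simpa using Set.Ioc_subset_Icc_self))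
  have hintegral (f : ℝ → ℝ) :
      ∫ z, liftIco (1 : ℝ) 0 f z ∂haarAddCircle = ∫ x in (0:ℝ)..1, f x := by
    rw [haarAddCircle_eq_volume, integral_liftIco, zero_add]
  rw [← tendsto_add_atTop_iff_nat 1]
  refine (tendsto_integral_abs_sub_of_succ_eq_convolution (hlift hgi) (fun _ => hg0 _)
    ((hintegral g).trans hg1) (h := fun M => liftIco (1 : ℝ) 0 (h (M + 1))) (hlift h1)
    fun M => ?_).congr fun M => ?_
  · rw [hrec (M + 1) (Nat.le_add_left 1 M), liftIco_circConv, haarAddCircle_eq_volume]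
  · rw [hintegral]
    exact hintegral fun x => |h (M + 1) x - ∫ y in (0:ℝ)..1, h 1 y|

end UnitInterval

/-- For a probability density `g` on `[0,1]`, the `M`-fold circular self-convolution
`h M = g ∗ g ∗ ⋯ ∗ g` (the density of the sum mod 1 of `M` i.i.d. random variables with
density `g`) converges in `L¹([0,1])` to the constant function `1` as `M → ∞`. -/
theorem modOneCLT_iid (g : ℝ → ℝ) (hg : IsProbDensity g)
    (h : ℕ → ℝ → ℝ) (h1 : h 1 = g)
    (hrec : ∀ M, 1 ≤ M → h (M + 1) = circConv (h M) g) :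
    Tendsto (fun M => ∫ x in (0:ℝ)..1, |h M x - 1|) atTop (nhds 0) := by
  simpa only [h1, hg.2.2] using modOneCLT_iid_general g hg h (h1 ▸ hg.2.1) hrec

end
end
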